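/- Every nonempty open cone in ℂ^m (i.e., a nonempty open set E ⊆ ℂ^m such that tz ∈ E whenever z ∈ E and t > 0) is non-thin at ∞. -/

import Mathlib

/-!
Fix a point `z` and a nonzero `e` in the cone. Since the cone is open, `z + t e = t (e + z / t)`
lies in it for all real `t ≥ a`, with `a` depending on `z` and `e` only. A competitor `u` for
`V_{E_R}(z)` therefore restricts on the line `w ↦ z + w e` to a subharmonic function `v` of
logarithmic growth with `v ≤ 0` on a segment `[a, b]`, where `b = (R - |z|) / |e|` tends to infinity
with `R`.

In one variable, `v` is compared with the Green function `G` of `ℂ \ [a, b]` with pole at infinity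
(`subharmonic_zero_le`). Here `G = log |(1 + s) / (1 - s)|` with `s = √((w - a) / (w - b))`, which
is locally the real part of a holomorphic function. The bound `v ≤ 2 G` follows from a maximum
principle (`le_of_subharmonic`): perturb `v - 2 G` by `δ|w|²`, take a maximum point off `[a, b]`, and
contradict the polynomial criterion for subharmonicity on a small circle around it, after replacing
the holomorphic function by a Taylor polynomial. Finally `s(0) = √(a / b)` tends to `0` as `b` tends
to infinity, so `G(0)` does too (`slitGreen_zero_le`), which gives `V_{E_R}(z) → 0`.
-/


open Filter Metric

noncomputable section

/-- An upper semicontinuous `EReal`-valued function `u` (never `+∞`) on `U ⊆ ℂ` is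
*subharmonic* on `U` if it satisfies the harmonic-polynomial maximum criterion:
whenever `u ≤ Re p` on a circle contained (with its disc) in `U`, for a complex
polynomial `p`, then `u ≤ Re p` throughout the corresponding closed disc. -/
def SubharmonicOn' (u : ℂ → EReal) (U : Set ℂ) : Prop :=
  UpperSemicontinuousOn u U ∧ (∀ z ∈ U, u z < ⊤) ∧
  ∀ (c : ℂ) (r : ℝ), 0 < r → closedBall c r ⊆ U →
    ∀ p : Polynomial ℂ,
      (∀ z ∈ sphere c r, u z ≤ ((p.eval z).re : EReal)) →
      ∀ z ∈ closedBall c r, u z ≤ ((p.eval z).re : EReal)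

/-- A function `u : ℂ^m → [-∞,∞)` is *plurisubharmonic* on `U` if it is upper
semicontinuous on `U`, nowhere `+∞` on `U`, and its restriction to every complex
line is subharmonic. -/
def PshOn {m : ℕ} (u : EuclideanSpace ℂ (Fin m) → EReal)
    (U : Set (EuclideanSpace ℂ (Fin m))) : Prop :=
  UpperSemicontinuousOn u U ∧ (∀ z ∈ U, u z < ⊤) ∧
  ∀ (a b : EuclideanSpace ℂ (Fin m)), b ≠ 0 →
    SubharmonicOn' (fun w => u (a + w • b)) {w : ℂ | a + w • b ∈ U}

/-- The class `𝕃` of plurisubharmonic functions on `ℂ^m` of minimal growth: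
`u(z) - log |z| ≤ O(1)` as `|z| → ∞`. -/
def MinGrowth {m : ℕ} (u : EuclideanSpace ℂ (Fin m) → EReal) : Prop :=
  PshOn u Set.univ ∧ ∃ C R₀ : ℝ, ∀ z, R₀ ≤ ‖z‖ → u z ≤ ((Real.log ‖z‖ + C : ℝ) : EReal)

/-- The pluricomplex Green function (Siciak extremal function) of `E ⊆ ℂ^m`:
`V_E(z) = sup { u(z) : u ∈ 𝕃, u ≤ 0 on E }`. -/
def greenFn {m : ℕ} (E : Set (EuclideanSpace ℂ (Fin m)))
    (z : EuclideanSpace ℂ (Fin m)) : EReal :=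
  sSup ((fun u => u z) '' {u | MinGrowth u ∧ ∀ x ∈ E, u x ≤ 0})

/-- The upper semicontinuous regularization `V_E*` of the Green function. -/
def greenFnStar {m : ℕ} (E : Set (EuclideanSpace ℂ (Fin m)))
    (z : EuclideanSpace ℂ (Fin m)) : EReal :=
  Filter.limsup (greenFn E) (nhds z)

/-- `E ⊆ ℂ^m` is non-thin at `∞` if `lim_{R→∞} V_{E_R}(z) = 0` for all `z ∈ ℂ^m`,
where `E_R = E ∩ {|z| ≤ R}`. -/
def NonthinAtInfty {m : ℕ} (E : Set (EuclideanSpace ℂ (Fin m))) : Prop :=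
  ∀ z, Tendsto (fun R : ℝ => greenFn (E ∩ closedBall 0 R) z) atTop (nhds (0 : EReal))

/-- `A ⊆ ℂ^m` is pluripolar if `A ⊆ {u = -∞}` for some plurisubharmonic `u ≢ -∞` on `ℂ^m`. -/
def Pluripolar {m : ℕ} (A : Set (EuclideanSpace ℂ (Fin m))) : Prop :=
  ∃ u : EuclideanSpace ℂ (Fin m) → EReal, PshOn u Set.univ ∧ (∃ z, u z ≠ ⊥) ∧ ∀ a ∈ A, u a = ⊥

/-- The Robin constant `γ(K) = limsup_{z→∞} [V_K*(z) - log |z|]`.  The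
`ℂ^m`-capacity is `C(K) = e^{-γ(K)}`, so that `log C(K) = -γ(K)`. -/
def robinConst {m : ℕ} (K : Set (EuclideanSpace ℂ (Fin m))) : EReal :=
  Filter.limsup (fun z => greenFnStar K z - ((Real.log ‖z‖ : ℝ) : EReal))
    (Bornology.cobounded (EuclideanSpace ℂ (Fin m)))

/-! ### Maximum principle -/

/-- A holomorphic function on a ball is a uniform limit of polynomials on smaller balls. -/
lemma exists_polynomial_approx {F : ℂ → ℂ} {c : ℂ} {ρ : ℝ} (hF : DifferentiableOn ℂ F (ball c ρ))
    {r ε : ℝ} (hr : 0 < r) (hrρ : r < ρ) (hε : 0 < ε) :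
    ∃ p : Polynomial ℂ, ∀ w ∈ closedBall c r, ‖F w - p.eval w‖ < ε := by
  obtain ⟨r₁, hr₁, hr₁'⟩ := exists_between hrρ
  obtain ⟨r₂, hr₂, hr₂'⟩ := exists_between hr₁'
  lift r₁ to NNReal using by linarith
  lift r₂ to NNReal using by linarith
  have h := (hF.mono (closedBall_subset_ball hr₂')).hasFPowerSeriesOnBall
    (by exact_mod_cast (by linarith : (0 : ℝ) < r₂))
  have hu := h.tendstoUniformlyOn (r' := r₁) (by exact_mod_cast hr₂)
  rw [Metric.tendstoUniformlyOn_iff] at hu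
  obtain ⟨n, hn⟩ := (hu ε hε).exists
  refine ⟨∑ k ∈ Finset.range n, Polynomial.C ((cauchyPowerSeries F c r₂).coeff k) *
    (Polynomial.X - Polynomial.C c) ^ k, fun w hw => ?_⟩
  have h1 := hn (w - c) (by
    rw [mem_closedBall, dist_eq_norm] at hw
    rw [mem_ball, dist_zero_right]; linarith)
  rw [dist_eq_norm, add_sub_cancel] at h1
  refine lt_of_eq_of_lt (congrArg (fun y => ‖F w - y‖) ?_) h1
  rw [Polynomial.eval_finsetSum, FormalMultilinearSeries.partialSum]
  refine Finset.sum_congr rfl fun k _ => ?_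
  rw [FormalMultilinearSeries.apply_eq_pow_smul_coeff]
  simp [mul_comm]

lemma EReal.le_coe_sub_of_add_le {a : EReal} {x y : ℝ} (h : a + (x : EReal) ≤ (y : EReal)) :
    a ≤ ((y - x : ℝ) : EReal) := by
  induction a with
  | bot => exact bot_le
  | top => simp at h
  | coe a => norm_cast at h ⊢; linarith

/-- Maximum principle: if `H` is lower semicontinuous, locally the real part of a holomorphic
function off `K`, and dominates the subharmonic function `v` on `K` and on the circle `|w| = L`,
then it dominates `v` on the disc `|w| ≤ L`. -/
lemma le_of_subharmonic {v : ℂ → EReal} (hv : SubharmonicOn' v Set.univ) {K : Set ℂ} {H : ℂ → ℝ}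
    (hH : LowerSemicontinuous H) (hK : ∀ w ∈ K, v w ≤ H w) {L : ℝ}
    (hL : ∀ w, ‖w‖ = L → v w ≤ H w)
    (hloc : ∀ w₀, w₀ ∉ K → ∃ ρ > 0, ∃ F : ℂ → ℂ, DifferentiableOn ℂ F (ball w₀ ρ) ∧
      ∀ w ∈ ball w₀ ρ, H w = (F w).re)
    {z : ℂ} (hz : ‖z‖ ≤ L) : v z ≤ H z := by
  by_contra! hlt
  obtain ⟨husc, htop, hsub⟩ := hv
  obtain ⟨V₁, hV₁⟩ : ∃ V₁ : ℝ, v z = V₁ :=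
    ⟨_, (EReal.coe_toReal (htop z trivial).ne (ne_bot_of_gt hlt)).symm⟩
  rw [hV₁, EReal.coe_lt_coe_iff] at hlt
  -- The strictly subharmonic perturbation `δ|w|²` stays below the excess `v z - H z` on the disc.
  obtain ⟨δ, hδ, hδL⟩ : ∃ δ > 0, δ * L ^ 2 < V₁ - H z := by
    refine ⟨(V₁ - H z) / (2 * (L ^ 2 + 1)), by have : 0 < V₁ - H z := by linarith
                                               positivity, ?_⟩
    rw [div_mul_eq_mul_div, div_lt_iff₀ (by positivity)]
    nlinarith [sq_nonneg L]
  set g : ℂ → ℝ := fun w => δ * ‖w‖ ^ 2 - H w with hg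
  have hgusc : UpperSemicontinuous g := by
    have h1 : UpperSemicontinuous fun w => -H w :=
      continuous_neg.comp_lowerSemicontinuous_antitone hH (fun a b h => neg_le_neg h)
    have h2 : Continuous fun w : ℂ => δ * ‖w‖ ^ 2 := by fun_prop
    simpa [hg, sub_eq_add_neg] using h2.upperSemicontinuous.add h1
  have hgusc' : UpperSemicontinuous fun w => (g w : EReal) :=
    continuous_coe_real_ereal.comp_upperSemicontinuous hgusc EReal.coe_strictMono.monotone
  have hsum : UpperSemicontinuousOn (fun w => v w + (g w : EReal)) (closedBall 0 L) := by
    refine (husc.mono (Set.subset_univ _)).add' (hgusc'.upperSemicontinuousOn _) fun w _ => ?_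
    exact EReal.continuousAt_add (Or.inr (EReal.coe_ne_bot _)) (Or.inr (EReal.coe_ne_top _))
  have hzL : z ∈ closedBall (0 : ℂ) L := by simpa using hz
  obtain ⟨w₀, hw₀L, hmax⟩ := hsum.exists_isMaxOn ⟨z, hzL⟩ (isCompact_closedBall 0 L)
  have hmax' : ∀ w ∈ closedBall (0 : ℂ) L, v w + (g w : EReal) ≤ v w₀ + (g w₀ : EReal) :=
    fun w hw => hmax hw
  have hw₀L' : ‖w₀‖ ≤ L := by simpa using hw₀L
  have hbig := hmax' z hzL
  rw [hV₁] at hbig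
  obtain ⟨V, hV⟩ : ∃ V : ℝ, v w₀ = V := by
    refine ⟨_, (EReal.coe_toReal (htop w₀ trivial).ne fun hb => ?_).symm⟩
    rw [hb, EReal.bot_add, ← EReal.coe_add] at hbig
    exact EReal.coe_ne_bot _ (le_bot_iff.1 hbig)
  rw [hV] at hbig hmax'
  norm_cast at hbig
  have hVH : H w₀ < V := by
    have h1 : ‖w₀‖ ^ 2 ≤ L ^ 2 := by gcongr
    have h2 : 0 ≤ δ * ‖z‖ ^ 2 := by positivity
    simp only [hg] at hbig
    nlinarith
  have hw₀K : w₀ ∉ K := fun h => by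
    have := hK w₀ h; rw [hV] at this; norm_cast at this; linarith
  have hw₀lt : ‖w₀‖ < L := lt_of_le_of_ne hw₀L' fun h => by
    have := hL w₀ h; rw [hV] at this; norm_cast at this; linarith
  obtain ⟨ρ, hρ, F, hF, hFH⟩ := hloc w₀ hw₀K
  obtain ⟨r, hr, hr'⟩ := exists_between (lt_min hρ (sub_pos.2 hw₀lt))
  have hrρ := hr'.trans_le (min_le_left _ _)
  have hrL := hr'.trans_le (min_le_right _ _)
  obtain ⟨p, hp⟩ := exists_polynomial_approx hF hr hrρ (ε := δ * r ^ 2 / 4) (by positivity)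
  have hp' : ∀ w ∈ closedBall w₀ r, |H w - (p.eval w).re| < δ * r ^ 2 / 4 := fun w hw => by
    rw [hFH w (closedBall_subset_ball hrρ hw), ← Complex.sub_re]
    exact (Complex.abs_re_le_norm _).trans_lt (hp w hw)
  -- On the circle `|w - w₀| = r` the function `|w|²` agrees with the real part of
  -- `|w₀|² + r² + 2 (w - w₀) conj w₀`, whose value at `w₀` exceeds `|w₀|²` by `r²`.
  have key := hsub w₀ r hr (Set.subset_univ _)
    (p + Polynomial.C ((V - H w₀ + δ * r ^ 2 / 4 - δ * r ^ 2 : ℝ) : ℂ)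
      - Polynomial.C ((2 * δ : ℝ) * (starRingEnd ℂ) w₀) * (Polynomial.X - Polynomial.C w₀))
    (fun w hw => by
      have hw' : ‖w - w₀‖ = r := by simpa [dist_eq_norm] using hw
      have hwL : w ∈ closedBall (0 : ℂ) L := by
        have : ‖w‖ ≤ ‖w - w₀‖ + ‖w₀‖ := by simpa using norm_add_le (w - w₀) w₀
        rw [mem_closedBall, dist_zero_right]; linarith
      have h1 := hmax' w hwL
      rw [← EReal.coe_add] at h1
      refine (EReal.le_coe_sub_of_add_le h1).trans ?_
      rw [EReal.coe_le_coe_iff]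
      have h2 := (abs_lt.1 (hp' w (sphere_subset_closedBall hw))).2
      have h3 : ‖w - w₀‖ ^ 2 = r ^ 2 := by rw [hw']
      simp only [hg, Polynomial.eval_sub, Polynomial.eval_add, Polynomial.eval_mul,
        Polynomial.eval_C, Polynomial.eval_X, Complex.sub_re, Complex.add_re, Complex.mul_re,
        Complex.mul_im, Complex.ofReal_re, Complex.ofReal_im, Complex.conj_re, Complex.conj_im,
        Complex.sub_im, Complex.sq_norm, Complex.normSq_apply] at h3 ⊢
      linear_combination h2 - δ * h3)
    w₀ (mem_closedBall_self hr.le)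
  rw [hV, EReal.coe_le_coe_iff] at key
  have h2 := (abs_lt.1 (hp' w₀ (mem_closedBall_self hr.le))).1
  have h4 : 0 < δ * r ^ 2 := by positivity
  simp only [Polynomial.eval_sub, Polynomial.eval_add, Polynomial.eval_mul,
        Polynomial.eval_C, Polynomial.eval_X, sub_self, mul_zero, Complex.sub_re, Complex.add_re,
        Complex.ofReal_re, Complex.zero_re] at key
  linarith

/-! ### The Green function of a segment -/

/-- The square root `s(w) = √((w - a)/(w - b))`, mapping the complement of the segment `[a, b]`
into the right half-plane. -/
def slitRoot (a b : ℝ) (w : ℂ) : ℂ := Complex.exp (Complex.log ((w - a) / (w - b)) / 2)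

/-- The segment `[a, b]` of the real line, as a subset of `ℂ`. -/
def slit (a b : ℝ) : Set ℂ := (fun t : ℝ => (t : ℂ)) '' Set.Icc a b

lemma isClosed_slit (a b : ℝ) : IsClosed (slit a b) :=
  (isCompact_Icc.image Complex.continuous_ofReal).isClosed

lemma sub_ne_zero_of_notMem_slit {a b : ℝ} (hab : a < b) {w : ℂ} (hw : w ∉ slit a b) :
    w - b ≠ 0 := fun h => hw ⟨b, ⟨hab.le, le_rfl⟩, (sub_eq_zero.1 h).symm⟩

lemma div_mem_slitPlane {a b : ℝ} (hab : a < b) {w : ℂ} (hw : w ∉ slit a b) :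
    (w - a) / (w - b) ∈ Complex.slitPlane := by
  by_contra h
  have hb := sub_ne_zero_of_notMem_slit hab hw
  rw [Complex.mem_slitPlane_iff, not_or, not_lt, not_not] at h
  obtain ⟨hre, him⟩ := h
  set q := (w - a) / (w - b) with hq
  obtain ⟨t, ht, hqt⟩ : ∃ t : ℝ, 0 ≤ t ∧ q = ((-t : ℝ) : ℂ) :=
    ⟨-q.re, by linarith, Complex.ext (by simp) (by simp [him])⟩
  have h1 : w - a = -t * (w - b) := by
    have := hqt; rw [hq, div_eq_iff hb] at this; simpa using this
  have ht1 : 0 < 1 + t := by linarith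
  have ht1c : (1 + t : ℂ) ≠ 0 := by exact_mod_cast ht1.ne'
  refine hw ⟨(a + t * b) / (1 + t), ⟨?_, ?_⟩, ?_⟩
  · rw [le_div_iff₀ ht1]; nlinarith
  · rw [div_le_iff₀ ht1]; nlinarith
  · push_cast
    rw [div_eq_iff ht1c]
    linear_combination -h1

lemma slitRoot_re_nonneg (a b : ℝ) (w : ℂ) : 0 ≤ (slitRoot a b w).re := by
  rw [slitRoot, Complex.exp_re]
  have h1 : (Complex.log ((w - a) / (w - b)) / 2).im = ((w - a) / (w - b)).arg / 2 := by
    simp [Complex.log_im]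
  rw [h1]
  have h2 := Complex.neg_pi_lt_arg ((w - a) / (w - b))
  have h3 := Complex.arg_le_pi ((w - a) / (w - b))
  exact mul_nonneg (Real.exp_pos _).le
    (Real.cos_nonneg_of_mem_Icc ⟨by linarith, by linarith⟩)

lemma slitRoot_sq {a b : ℝ} (hab : a < b) {w : ℂ} (hw : w ∉ slit a b) :
    slitRoot a b w ^ 2 = (w - a) / (w - b) := by
  rw [slitRoot, ← Complex.exp_nat_mul]
  have : ((2 : ℕ) : ℂ) * (Complex.log ((w - a) / (w - b)) / 2)
      = Complex.log ((w - a) / (w - b)) := by push_cast; ring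
  rw [this, Complex.exp_log (Complex.slitPlane_ne_zero (div_mem_slitPlane hab hw))]

lemma differentiableAt_slitRoot {a b : ℝ} (hab : a < b) {w : ℂ} (hw : w ∉ slit a b) :
    DifferentiableAt ℂ (slitRoot a b) w := by
  have h1 : DifferentiableAt ℂ (fun w : ℂ => (w - a) / (w - b)) w :=
    (by fun_prop : DifferentiableAt ℂ (fun w : ℂ => w - a) w).div (by fun_prop)
      (sub_ne_zero_of_notMem_slit hab hw)
  exact ((h1.clog (div_mem_slitPlane hab hw)).div_const 2).cexp

open Classical in
/-- The Green function of `ℂ \ [a, b]` with pole at infinity, extended by `0` on `[a, b]`.  With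
`s = slitRoot a b w` it is `log |(1 + s) / (1 - s)|`, rewritten through
`1 - s² = (a - b) / (w - b)`. -/
def slitGreen (a b : ℝ) (w : ℂ) : ℝ :=
  if w ∈ slit a b then 0
  else 2 * Real.log ‖1 + slitRoot a b w‖ + Real.log ‖w - b‖ - Real.log (b - a)

lemma one_le_norm_one_add_slitRoot (a b : ℝ) (w : ℂ) : 1 ≤ ‖1 + slitRoot a b w‖ := by
  have h := Complex.abs_re_le_norm (1 + slitRoot a b w)
  have h1 := slitRoot_re_nonneg a b w
  have h2 := le_abs_self (1 + slitRoot a b w).re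
  simp only [Complex.add_re, Complex.one_re] at h h2
  linarith

lemma slitGreen_nonneg {a b : ℝ} (hab : a < b) (w : ℂ) : 0 ≤ slitGreen a b w := by
  rw [slitGreen]
  split_ifs with hw
  · rfl
  have hb := sub_ne_zero_of_notMem_slit hab hw
  set s := slitRoot a b w with hs
  have h1 : 1 ≤ ‖1 + s‖ := one_le_norm_one_add_slitRoot a b w
  have h2 : ‖1 - s‖ ≤ ‖1 + s‖ := by
    have := slitRoot_re_nonneg a b w
    rw [← hs] at this
    refine (sq_le_sq₀ (norm_nonneg _) (norm_nonneg _)).1 ?_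
    simp only [Complex.sq_norm, Complex.normSq_apply, Complex.sub_re, Complex.add_re,
      Complex.sub_im, Complex.add_im, Complex.one_re, Complex.one_im]
    nlinarith
  have h3 : ‖1 + s‖ * ‖1 - s‖ * ‖w - b‖ = b - a := by
    rw [← norm_mul, ← norm_mul]
    have : (1 + s) * (1 - s) * (w - b) = ((a - b : ℝ) : ℂ) := by
      have h4 : s ^ 2 * (w - b) = w - a := by
        rw [hs, slitRoot_sq hab hw, div_mul_cancel₀ _ hb]
      push_cast; linear_combination -h4
    rw [this, Complex.norm_real, Real.norm_eq_abs, abs_sub_comm, abs_of_pos (by linarith)]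
  have hwb : 0 < ‖w - b‖ := norm_pos_iff.2 hb
  have h5 : b - a ≤ ‖1 + s‖ ^ 2 * ‖w - b‖ := by
    rw [← h3, sq]; gcongr
  have h6 := Real.log_le_log (by linarith) h5
  rw [Real.log_mul (by positivity) hwb.ne', Real.log_pow] at h6
  push_cast at h6
  linarith

lemma le_slitGreen {a b : ℝ} {w : ℂ} (hw : w ∉ slit a b) :
    Real.log ‖w - b‖ - Real.log (b - a) ≤ slitGreen a b w := by
  rw [slitGreen, if_neg hw]
  linarith [Real.log_nonneg (one_le_norm_one_add_slitRoot a b w)]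

/-- The Green function of `ℂ \ [a, b]` is locally the real part of a holomorphic function. -/
lemma slitGreen_local {a b : ℝ} (hab : a < b) {w₀ : ℂ} (hw₀ : w₀ ∉ slit a b) :
    ∃ ρ > 0, ∃ F : ℂ → ℂ, DifferentiableOn ℂ F (ball w₀ ρ) ∧
      ∀ w ∈ ball w₀ ρ, slitGreen a b w = (F w).re := by
  obtain ⟨ρ, hρ, hsub⟩ := Metric.isOpen_iff.1 (isClosed_slit a b).isOpen_compl w₀ hw₀
  have hb₀ := sub_ne_zero_of_notMem_slit hab hw₀
  have hd : 0 < ‖w₀ - b‖ := norm_pos_iff.2 hb₀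
  have hdiv : ∀ w ∈ ball w₀ (min ρ ‖w₀ - b‖), (w - b) / (w₀ - b) ∈ Complex.slitPlane := by
    intro w hw
    have h1 : ‖(w - w₀) / (w₀ - b)‖ < 1 := by
      rw [norm_div, div_lt_one hd, ← dist_eq_norm]
      exact (mem_ball.1 hw).trans_le (min_le_right _ _)
    have h2 : (w - b) / (w₀ - b) = 1 + (w - w₀) / (w₀ - b) := by field_simp; ring
    rw [h2]
    exact Complex.mem_slitPlane_of_norm_lt_one h1
  refine ⟨min ρ ‖w₀ - b‖, lt_min hρ hd, fun w => 2 * Complex.log (1 + slitRoot a b w) +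
    Complex.log ((w - b) / (w₀ - b)) + ((Real.log ‖w₀ - b‖ - Real.log (b - a) : ℝ) : ℂ),
    fun w hw => ?_, fun w hw => ?_⟩
  · have hwK : w ∉ slit a b := hsub (ball_subset_ball (min_le_left _ _) hw)
    apply DifferentiableAt.differentiableWithinAt
    have h1 : DifferentiableAt ℂ (fun w => Complex.log (1 + slitRoot a b w)) w := by
      refine ((differentiableAt_slitRoot hab hwK).const_add 1).clog (Or.inl ?_)
      have := slitRoot_re_nonneg a b w
      simp only [Complex.add_re, Complex.one_re]; linarith
    have h2 : DifferentiableAt ℂ (fun w : ℂ => Complex.log ((w - b) / (w₀ - b))) w :=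
      DifferentiableAt.clog (by fun_prop) (hdiv w hw)
    exact ((h1.const_mul 2).add h2).add_const _
  · have hwK : w ∉ slit a b := hsub (ball_subset_ball (min_le_left _ _) hw)
    have hwb := norm_ne_zero_iff.2 (sub_ne_zero_of_notMem_slit hab hwK)
    rw [slitGreen, if_neg hwK]
    simp only [Complex.add_re, Complex.ofReal_re, Complex.mul_re, Complex.re_ofNat,
      Complex.im_ofNat, zero_mul, sub_zero, Complex.log_re, norm_div]
    rw [Real.log_div hwb hd.ne']
    ring

lemma lowerSemicontinuous_slitGreen {a b : ℝ} (hab : a < b) :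
    LowerSemicontinuous (slitGreen a b) := by
  intro w
  by_cases hw : w ∈ slit a b
  · intro y hy
    have h0 : slitGreen a b w = 0 := if_pos hw
    exact Eventually.of_forall fun x =>
      (by rw [h0] at hy; exact hy : y < 0).trans_le (slitGreen_nonneg hab x)
  · obtain ⟨ρ, hρ, F, hF, hFe⟩ := slitGreen_local hab hw
    have h1 : ContinuousAt F w :=
      (hF.differentiableAt (ball_mem_nhds w hρ)).continuousAt
    have h2 : ContinuousAt (slitGreen a b) w :=
      (Complex.continuous_re.continuousAt.comp h1).congr
        (by filter_upwards [ball_mem_nhds w hρ] with x hx using (hFe x hx).symm)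
    exact h2.lowerSemicontinuousAt

lemma slitGreen_zero_le {a b : ℝ} (ha : 0 < a) (hab : a < b) :
    slitGreen a b 0 ≤ 2 * Real.log (1 + Real.sqrt (a / b)) - Real.log (1 - a / b) := by
  have hb : 0 < b := ha.trans hab
  have h0 : (0 : ℂ) ∉ slit a b := by
    rintro ⟨t, ht, h⟩
    have : t = 0 := Complex.ofReal_eq_zero.1 h
    linarith [ht.1]
  have hs : ‖slitRoot a b 0‖ = Real.sqrt (a / b) := by
    have h1 : ((0 : ℂ) - a) / (0 - b) = ((a / b : ℝ) : ℂ) := by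
      push_cast; rw [zero_sub, zero_sub, neg_div_neg_eq]
    have hn := congrArg norm (slitRoot_sq hab h0)
    rw [h1, norm_pow, Complex.norm_real, Real.norm_eq_abs, abs_of_pos (by positivity)] at hn
    rw [← hn, Real.sqrt_sq (norm_nonneg _)]
  rw [slitGreen, if_neg h0]
  have h2 : ‖1 + slitRoot a b 0‖ ≤ 1 + Real.sqrt (a / b) := by
    rw [← hs]; simpa using norm_add_le 1 (slitRoot a b 0)
  have h3 := Real.log_le_log
    (by linarith [one_le_norm_one_add_slitRoot a b 0]) h2
  have h4 : ‖(0 : ℂ) - b‖ = b := by simp [abs_of_pos hb]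
  have h5 : 1 - a / b = (b - a) / b := by field_simp
  rw [h4, h5, Real.log_div (by linarith) hb.ne']
  linarith

/-- Bernstein–Walsh inequality at the origin, with a factor `2`: a subharmonic function of
logarithmic growth that is nonpositive on `[a, b]` is at most twice the Green function at `0`.  The
factor makes the growth at infinity strictly smaller than that of the majorant. -/
lemma subharmonic_zero_le {v : ℂ → EReal} (hv : SubharmonicOn' v Set.univ) {a b : ℝ}
    (ha : 0 < a) (hab : a < b) (hvK : ∀ t : ℝ, a ≤ t → t ≤ b → v t ≤ 0)
    {A B C L₀ : ℝ} (hA : 0 ≤ A) (hB : 0 < B)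
    (hgrow : ∀ w, L₀ ≤ ‖w‖ → v w ≤ ((Real.log (A + B * ‖w‖) + C : ℝ) : EReal)) :
    v 0 ≤ ((2 * slitGreen a b 0 : ℝ) : EReal) := by
  -- A radius on which the majorant already exceeds the growth bound for `v`.
  obtain ⟨L, hLL₀, hLb, hL⟩ : ∃ L, L₀ ≤ L ∧ b < L ∧
      Real.log (A + B * L) + C ≤ 2 * (Real.log (L - b) - Real.log (b - a)) := by
    have hba : 0 < b - a := by linarith
    set D := Real.exp C * (b - a) ^ 2 with hD
    have hDpos : 0 < D := by positivity
    have hb : 0 < b := by linarith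
    obtain ⟨x, hx1, hx2, hx3⟩ : ∃ x : ℝ, 1 ≤ x ∧ L₀ ≤ x ∧ D * (A + B * b + B) ≤ x :=
      ⟨max 1 (max L₀ (D * (A + B * b + B))), le_max_left _ _,
        (le_max_left _ _).trans (le_max_right _ _), (le_max_right _ _).trans (le_max_right _ _)⟩
    refine ⟨x + b, by linarith, by linarith, ?_⟩
    have hx0 : 0 < x := by linarith
    have hpos : 0 < A + B * (x + b) := by positivity
    have h1 : (A + B * (x + b)) * D ≤ x ^ 2 := by
      have h2 : A + B * (x + b) ≤ (A + B * b + B) * x := by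
        nlinarith [mul_nonneg (by positivity : 0 ≤ A + B * b) (by linarith : 0 ≤ x - 1)]
      nlinarith
    have h3 := Real.log_le_log (by positivity) h1
    rw [hD, Real.log_mul hpos.ne' (by positivity), Real.log_mul (by positivity) (by positivity),
      Real.log_exp, Real.log_pow, Real.log_pow] at h3
    push_cast at h3
    rw [add_sub_cancel_right]
    linarith
  have hb : 0 < b := by linarith
  refine le_of_subharmonic (K := slit a b) (H := fun w => 2 * slitGreen a b w) (L := L) hv
    ?_ ?_ ?_ ?_ (by rw [norm_zero]; linarith)
  · exact (continuous_const_mul (2 : ℝ)).comp_lowerSemicontinuous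
      (lowerSemicontinuous_slitGreen hab) (fun x y h => by dsimp only; linarith)
  · rintro _ ⟨t, ht, rfl⟩
    refine (hvK t ht.1 ht.2).trans ?_
    have := slitGreen_nonneg hab (t : ℂ)
    exact_mod_cast (by linarith : 0 ≤ 2 * slitGreen a b t)
  · intro w hw
    refine (hgrow w (by linarith)).trans ?_
    rw [EReal.coe_le_coe_iff, hw]
    have hwK : w ∉ slit a b := by
      rintro ⟨t, ht, rfl⟩
      rw [Complex.norm_real, Real.norm_eq_abs, abs_of_pos (by linarith [ht.1])] at hw
      linarith [ht.2]
    have h1 := le_slitGreen hwK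
    have h2 : L - b ≤ ‖w - b‖ := by
      have := norm_sub_norm_le w (b : ℂ)
      rwa [hw, Complex.norm_real, Real.norm_eq_abs, abs_of_pos hb] at this
    have h3 := Real.log_le_log (by linarith) h2
    linarith
  · intro w₀ hw₀
    obtain ⟨ρ, hρ, F, hF, hFe⟩ := slitGreen_local hab hw₀
    refine ⟨ρ, hρ, fun w => 2 * F w, hF.const_mul 2, fun w hw => ?_⟩
    simp [hFe w hw]

/-! ### Restriction to complex lines -/

lemma greenFn_nonneg {m : ℕ} (S : Set (EuclideanSpace ℂ (Fin m)))
    (z : EuclideanSpace ℂ (Fin m)) : 0 ≤ greenFn S z := by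
  refine le_sSup ⟨fun _ => 0, ⟨⟨⟨?_, fun _ _ => EReal.zero_lt_top, fun a b _ => ⟨?_, ?_, ?_⟩⟩,
    0, 1, fun z hz => ?_⟩, fun _ _ => le_rfl⟩, rfl⟩
  · exact continuous_const.upperSemicontinuous.upperSemicontinuousOn _
  · exact continuous_const.upperSemicontinuous.upperSemicontinuousOn _
  · exact fun _ _ => EReal.zero_lt_top
  · -- The constant `0` satisfies the polynomial criterion by the maximum principle for `exp (-p)`.
    intro c r hr _ p hp z hz
    have hd : DiffContOnCl ℂ (fun w => Complex.exp (-p.eval w)) (ball c r) :=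
      (p.differentiable.neg.cexp).diffContOnCl
    have hfr : ∀ w ∈ frontier (ball c r), ‖Complex.exp (-p.eval w)‖ ≤ 1 := by
      intro w hw
      rw [frontier_ball c hr.ne'] at hw
      have h : (0 : EReal) ≤ ((p.eval w).re : EReal) := hp w hw
      rw [Complex.norm_exp, Real.exp_le_one_iff, Complex.neg_re]
      have h' : 0 ≤ (p.eval w).re := by exact_mod_cast h
      linarith
    have h := Complex.norm_le_of_forall_mem_frontier_norm_le isBounded_ball hd hfr
      (by rwa [closure_ball c hr.ne'])
    rw [Complex.norm_exp, Real.exp_le_one_iff, Complex.neg_re] at h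
    exact EReal.coe_nonneg.2 (by linarith)
  · have := Real.log_nonneg hz
    exact EReal.coe_nonneg.2 (by linarith)

/-- If `S` contains the segment `z + t e`, `a ≤ t ≤ b`, then competitors for `S` restrict to the
complex line `w ↦ z + w e` as competitors for `[a, b]`. -/
lemma greenFn_le_slitGreen {m : ℕ} {S : Set (EuclideanSpace ℂ (Fin m))}
    {z e : EuclideanSpace ℂ (Fin m)} (he : e ≠ 0) {a b : ℝ} (ha : 0 < a) (hab : a < b)
    (hS : ∀ t : ℝ, a ≤ t → t ≤ b → z + (t : ℂ) • e ∈ S) :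
    greenFn S z ≤ ((2 * slitGreen a b 0 : ℝ) : EReal) := by
  refine sSup_le ?_
  rintro _ ⟨u, ⟨⟨hpsh, C, R₀, hgrow⟩, huS⟩, rfl⟩
  have hv : SubharmonicOn' (fun w : ℂ => u (z + w • e)) Set.univ := by
    simpa using hpsh.2.2 z e he
  have hen : 0 < ‖e‖ := norm_pos_iff.2 he
  have := subharmonic_zero_le hv ha hab (fun t h1 h2 => huS _ (hS t h1 h2))
    (A := ‖z‖) (B := ‖e‖) (C := C) (L₀ := (max R₀ 1 + ‖z‖) / ‖e‖) (norm_nonneg z) hen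
    (fun w hw => by
      rw [div_le_iff₀ hen] at hw
      have h1 : ‖w‖ * ‖e‖ - ‖z‖ ≤ ‖z + w • e‖ := by
        have := norm_sub_norm_le (w • e) (-z)
        rwa [norm_neg, sub_neg_eq_add, add_comm (w • e), norm_smul] at this
      have h2 : ‖z + w • e‖ ≤ ‖z‖ + ‖e‖ * ‖w‖ := by
        have := norm_add_le z (w • e)
        rwa [norm_smul, mul_comm] at this
      have h3 := le_max_left R₀ 1
      have h4 := le_max_right R₀ 1
      refine (hgrow _ (by linarith)).trans ?_
      rw [EReal.coe_le_coe_iff]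
      have := Real.log_le_log (by linarith) h2
      linarith)
  simpa using this

/-- Every nonempty open cone in `ℂ^m` is non-thin at `∞`. -/
theorem nonthinAtInfty_of_open_cone {m : ℕ}
    (E : Set (EuclideanSpace ℂ (Fin m))) (hne : E.Nonempty) (hopen : IsOpen E)
    (hcone : ∀ z ∈ E, ∀ t : ℝ, 0 < t → (t : ℂ) • z ∈ E) :
    NonthinAtInfty E := by
  intro z
  by_cases hex : ∃ e ∈ E, e ≠ 0
  · obtain ⟨e, heE, he⟩ := hex
    have hen : 0 < ‖e‖ := norm_pos_iff.2 he
    -- `z + t e = t (e + z / t)` lies in the cone as soon as `e + z / t` is close to `e`.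
    obtain ⟨a, ha, haE⟩ : ∃ a : ℝ, 0 < a ∧ ∀ t : ℝ, a ≤ t → z + (t : ℂ) • e ∈ E := by
      have h1 : Tendsto (fun t : ℝ => e + ((t⁻¹ : ℝ) : ℂ) • z) atTop (nhds e) := by
        have h2 : Tendsto (fun t : ℝ => ((t⁻¹ : ℝ) : ℂ)) atTop (nhds ((0 : ℝ) : ℂ)) :=
          (Complex.continuous_ofReal.tendsto 0).comp tendsto_inv_atTop_zero
        simpa using (h2.smul_const z).const_add e
      obtain ⟨a, ha⟩ := eventually_atTop.1 (h1.eventually (hopen.mem_nhds heE))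
      refine ⟨max a 1, by positivity, fun t ht => ?_⟩
      have ht0 : 0 < t := lt_of_lt_of_le (by positivity) ht
      have h3 := hcone _ (ha t ((le_max_left _ _).trans ht)) t ht0
      rwa [smul_add, smul_smul, ← Complex.ofReal_mul, mul_inv_cancel₀ ht0.ne', Complex.ofReal_one,
        one_smul, add_comm] at h3
    set b : ℝ → ℝ := fun R => (R - ‖z‖) / ‖e‖ with hb
    have hbt : Tendsto b atTop atTop :=
      (tendsto_atTop_add_const_right _ (-‖z‖) tendsto_id).atTop_div_const hen
    have hlim : Tendsto (fun R => ((2 * (2 * Real.log (1 + Real.sqrt (a / b R))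
        - Real.log (1 - a / b R)) : ℝ) : EReal)) atTop (nhds 0) := by
      have h0 : Tendsto (fun R => a / b R) atTop (nhds 0) := hbt.const_div_atTop a
      have hc : ContinuousAt (fun x : ℝ => 2 * (2 * Real.log (1 + Real.sqrt x)
          - Real.log (1 - x))) 0 := by
        have h1 : ContinuousAt (fun x : ℝ => Real.log (1 + Real.sqrt x)) 0 :=
          ContinuousAt.log (by fun_prop) (by simp)
        have h2 : ContinuousAt (fun x : ℝ => Real.log (1 - x)) 0 :=
          ContinuousAt.log (by fun_prop) (by simp)
        fun_prop
      have h3 := hc.tendsto.comp h0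
      simp only [Real.sqrt_zero, add_zero, sub_zero, Real.log_one, mul_zero] at h3
      exact (continuous_coe_real_ereal.tendsto 0).comp h3
    refine tendsto_of_tendsto_of_tendsto_of_le_of_le' tendsto_const_nhds hlim
      (Eventually.of_forall fun R => greenFn_nonneg _ z) ?_
    filter_upwards [hbt.eventually_gt_atTop a] with R hR
    have hseg : ∀ t : ℝ, a ≤ t → t ≤ b R → z + (t : ℂ) • e ∈ E ∩ closedBall 0 R := by
      refine fun t h1 h2 => ⟨haE t h1, ?_⟩
      rw [hb, le_div_iff₀ hen] at h2
      have h3 := norm_add_le z ((t : ℂ) • e)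
      rw [norm_smul, Complex.norm_real, Real.norm_eq_abs, abs_of_pos (by linarith)] at h3
      rw [mem_closedBall, dist_zero_right]
      linarith
    refine (greenFn_le_slitGreen he ha hR hseg).trans ?_
    rw [EReal.coe_le_coe_iff]
    linarith [slitGreen_zero_le ha hR]
  · -- An open set contained in `{0}` forces the whole space to be `{0}`.
    push Not at hex
    have h0 : (0 : EuclideanSpace ℂ (Fin m)) ∈ E := by
      obtain ⟨x, hx⟩ := hne; rwa [hex x hx] at hx
    have hz : z = 0 := by
      have h1 : Tendsto (fun t : ℝ => ((t : ℝ) : ℂ) • z) (nhdsWithin 0 (Set.Ioi 0)) (nhds 0) := by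
        have : Continuous fun t : ℝ => ((t : ℝ) : ℂ) • z := by fun_prop
        simpa using (this.tendsto 0).mono_left nhdsWithin_le_nhds
      obtain ⟨t, htE, ht⟩ := ((h1.eventually (hopen.mem_nhds h0)).and self_mem_nhdsWithin).exists
      have ht' : (t : ℂ) ≠ 0 := by exact_mod_cast (ne_of_gt ht)
      exact (smul_eq_zero.1 (hex _ htE)).resolve_left ht'
    refine tendsto_const_nhds.congr' ?_
    filter_upwards [eventually_ge_atTop 0] with R hR
    refine le_antisymm (greenFn_nonneg _ z) (sSup_le ?_)
    rintro _ ⟨u, ⟨-, hu⟩, rfl⟩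
    exact hu z ⟨hz ▸ h0, by simpa [hz] using hR⟩

end
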